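/- Suppose the primitive set ℬ ⊆ ℕ is taut. Then X_η = X_φ, i.e. the orbit closure of η under the left shift on {0,1}^ℤ equals the closure of φ(H), where H is the closure of the image of the diagonal embedding Δ : ℤ → ∏_{b∈ℬ} ℤ/bℤ and φ : H → {0,1}^ℤ is defined by φ(h)(n) = 1 iff h_b + n ≢ 0 (mod b) for all b ∈ ℬ. -/

import Mathlib

open Filter Set Topology MeasureTheory

open scoped Classical

noncomputable section

/-- The diagonal embedding `Δ : ℤ → ∏_{b ∈ B} ℤ/bℤ`. -/
def diagEmb (B : Set ℕ) : ℤ →+ ((b : B) → ZMod b) where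
  toFun n := fun b => (n : ZMod b)
  map_zero' := by ext b; simp
  map_add' m n := by ext b; simp [Int.cast_add]

/-- `H`, the topological closure of `Δ(ℤ)`, as a (closed) subgroup of `∏_{b ∈ B} ℤ/bℤ`. -/
def Hgrp (B : Set ℕ) : AddSubgroup ((b : B) → ZMod b) :=
  (diagEmb B).range.topologicalClosure

instance (B : Set ℕ) [∀ b : B, NeZero (b : ℕ)] : CompactSpace (Hgrp B) :=
  isCompact_iff_compactSpace.mp ((AddSubgroup.isClosed_topologicalClosure _).isCompact)

instance (B : Set ℕ) : MeasurableSpace (Hgrp B) := borel _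

instance (B : Set ℕ) : BorelSpace (Hgrp B) := ⟨rfl⟩

/-- The normalized Haar measure `m_H` on the compact abelian group `H`. -/
def mH (B : Set ℕ) [∀ b : B, NeZero (b : ℕ)] : Measure (Hgrp B) :=
  Measure.addHaarMeasure ⊤

/-- The window `W_{B'} ⊆ H` determined by a subset `B' ⊆ B`. -/
def Wset (B : Set ℕ) (B' : Set ℕ) : Set (Hgrp B) :=
  {h | ∀ b : B, (b : ℕ) ∈ B' → (h : (b : B) → ZMod b) b ≠ 0}

/-- The set of multiples `M_B ⊆ ℤ` of a set `B ⊆ ℕ`. -/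
def multiplesZ (B : Set ℕ) : Set ℤ := {n : ℤ | ∃ b ∈ B, (b : ℤ) ∣ n}

/-- The `B`-free integers `F_B = ℤ ∖ M_B`. -/
def freeZ (B : Set ℕ) : Set ℤ := (multiplesZ B)ᶜ

/-- The logarithmically weighted averages `(1/log n) ∑_{k=1}^n 1_A(k)/k`. -/
def logWeight (A : Set ℤ) (n : ℕ) : ℝ :=
  (Real.log n)⁻¹ * ∑ k ∈ Finset.Icc 1 n, A.indicator (fun m : ℤ => ((m : ℝ))⁻¹) (k : ℤ)

/-- The lower logarithmic density of a set `A ⊆ ℤ`. -/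
def logDensLow (A : Set ℤ) : ℝ := liminf (logWeight A) atTop

/-- `A ⊆ ℤ` has logarithmic density `d`. -/
def HasLogDensity (A : Set ℤ) (d : ℝ) : Prop := Tendsto (logWeight A) atTop (𝓝 d)

/-- `B` is primitive: no element divides another one. -/
def Primitive (B : Set ℕ) : Prop := ∀ b ∈ B, ∀ b' ∈ B, b ∣ b' → b = b'

/-- `B` is Behrend: its set of multiples has logarithmic density one. -/
def IsBehrend (B : Set ℕ) : Prop := logDensLow (multiplesZ B) = 1

/-- `B` is taut: removing any element strictly decreases the logarithmic density
of the set of multiples. -/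
def IsTaut (B : Set ℕ) : Prop :=
  ∀ b ∈ B, logDensLow (multiplesZ (B \ {b})) < logDensLow (multiplesZ B)

/-- `B̃^(N)`: the elements of `B` having no prime factor `≤ N`. -/
def Btilde (B : Set ℕ) (N : ℕ) : Set ℕ := {b ∈ B | ∀ p : ℕ, p.Prime → p ∣ b → N < p}

/-- `B^(N)`: the elements of `B` all of whose prime factors are `≤ N`. -/
def Bsmooth (B : Set ℕ) (N : ℕ) : Set ℕ := {b ∈ B | ∀ p : ℕ, p.Prime → p ∣ b → p ≤ N}

/-- `η ∈ {0,1}^ℤ`, the indicator function of the `B`-free integers. -/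
def eta (B : Set ℕ) : ℤ → Bool := fun n => decide (n ∈ freeZ B)

/-- `X_η`, the orbit closure of `η` under the left shift on `{0,1}^ℤ`. -/
def Xeta (B : Set ℕ) : Set (ℤ → Bool) :=
  closure (Set.range fun m : ℤ => fun n : ℤ => eta B (n + m))

/-- The coding function `φ : H → {0,1}^ℤ`, `φ(h)(n) = 1` iff `h_b + n ≠ 0 mod b`
for all `b ∈ B`. -/
def phiW (B : Set ℕ) : Hgrp B → ℤ → Bool :=
  fun h n => decide (∀ b : B, (h : (b : B) → ZMod b) b + (n : ZMod b) ≠ 0)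


/-- Invariant means on subsets of the integers. -/
structure InvMean (m : Set ℤ → ℝ) : Prop where
  nonneg : ∀ E, 0 ≤ m E
  univ : m Set.univ = 1
  add : ∀ E F, Disjoint E F → m (E ∪ F) = m E + m F
  shift : ∀ E, m ((fun x => x + 1) ⁻¹' E) = m E

def wsum (w : ℕ → ℝ) (E : Set ℤ) : ℝ := ∑' k : ℕ, E.indicator 1 ((k : ℤ) + 1) * w k

lemma ind_nonneg (E : Set ℤ) (x : ℤ) : (0 : ℝ) ≤ E.indicator 1 x := by
  by_cases h : x ∈ E <;> simp [h]

lemma ind_le_one (E : Set ℤ) (x : ℤ) : E.indicator (1 : ℤ → ℝ) x ≤ 1 := by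
  by_cases h : x ∈ E <;> simp [h]

lemma wsum_summable {w : ℕ → ℝ} (h0 : ∀ k, 0 ≤ w k) (hs : Summable w) (u : ℕ → ℤ) (E : Set ℤ) :
    Summable (fun k : ℕ => E.indicator (1 : ℤ → ℝ) (u k) * w k) := by
  refine Summable.of_nonneg_of_le (fun k => mul_nonneg (ind_nonneg _ _) (h0 k)) (fun k => ?_) hs
  have := ind_le_one E (u k)
  nlinarith [h0 k]

lemma wsum_nonneg {w : ℕ → ℝ} (h0 : ∀ k, 0 ≤ w k) (E : Set ℤ) : 0 ≤ wsum w E :=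
  tsum_nonneg (fun k => mul_nonneg (ind_nonneg _ _) (h0 k))

lemma wsum_add {w : ℕ → ℝ} (h0 : ∀ k, 0 ≤ w k) (hs : Summable w) (E F : Set ℤ)
    (hd : Disjoint E F) : wsum w (E ∪ F) = wsum w E + wsum w F := by
  unfold wsum
  rw [← Summable.tsum_add (wsum_summable h0 hs _ E) (wsum_summable h0 hs _ F)]
  congr 1; ext k
  rw [Set.indicator_union_of_disjoint hd]; ring

lemma wsum_mono {w : ℕ → ℝ} (h0 : ∀ k, 0 ≤ w k) (hs : Summable w) {E F : Set ℤ}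
    (hd : E ⊆ F) : wsum w E ≤ wsum w F := by
  refine Summable.tsum_le_tsum (fun k => ?_) (wsum_summable h0 hs _ E) (wsum_summable h0 hs _ F)
  refine mul_le_mul_of_nonneg_right ?_ (h0 k)
  exact Set.indicator_le_indicator_of_subset hd (fun _ => zero_le_one) _

lemma wsum_shift {w : ℕ → ℝ} (h0 : ∀ k, 0 ≤ w k) (hs : Summable w) (ha : Antitone w)
    (E : Set ℤ) : |wsum w ((fun x => x + 1) ⁻¹' E) - wsum w E| ≤ w 0 := by
  have hs1 : Summable (fun k => w (k+1)) := (summable_nat_add_iff 1).2 hs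
  have e1 : wsum w E = E.indicator 1 (1:ℤ) * w 0 +
      ∑' k : ℕ, E.indicator 1 ((k : ℤ) + 1 + 1) * w (k+1) := by
    unfold wsum
    rw [(wsum_summable h0 hs _ E).tsum_eq_zero_add]
    simp
  have e2 : wsum w ((fun x => x + 1) ⁻¹' E) = ∑' k : ℕ, E.indicator 1 ((k : ℤ) + 1 + 1) * w k := by
    unfold wsum
    rfl
  have e3 : ∑' k, w k = w 0 + ∑' k, w (k+1) := hs.tsum_eq_zero_add
  have sA := wsum_summable h0 hs (fun k => (k:ℤ) + 1 + 1) E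
  have sB := wsum_summable (fun k => h0 (k+1)) hs1 (fun k => (k:ℤ) + 1 + 1) E
  have l1 : ∑' k : ℕ, E.indicator (1 : ℤ → ℝ) ((k : ℤ) + 1 + 1) * w (k+1) ≤
      ∑' k : ℕ, E.indicator (1 : ℤ → ℝ) ((k : ℤ) + 1 + 1) * w k :=
    Summable.tsum_le_tsum (fun k => mul_le_mul_of_nonneg_left (ha (Nat.le_succ k))
      (ind_nonneg _ _)) sB sA
  have l2 : ∑' k : ℕ, E.indicator (1 : ℤ → ℝ) ((k : ℤ) + 1 + 1) * w k -
      ∑' k : ℕ, E.indicator (1 : ℤ → ℝ) ((k : ℤ) + 1 + 1) * w (k+1) ≤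
      ∑' k, w k - ∑' k, w (k+1) := by
    rw [← sA.tsum_sub sB, ← hs.tsum_sub hs1]
    refine Summable.tsum_le_tsum (fun k => ?_) (sA.sub sB) (hs.sub hs1)
    have := ind_le_one E ((k:ℤ)+1+1)
    have := ha (Nat.le_succ k)
    simp only [Nat.succ_eq_add_one] at this
    nlinarith
  have := ind_le_one E 1
  have := ind_nonneg E 1
  have := h0 0
  rw [abs_le, e1, e2]
  constructor <;> nlinarith

lemma exists_mean (w : ℕ → ℕ → ℝ) (c : ℕ → ℝ) (U : Ultrafilter ℕ)
    (h0 : ∀ i k, 0 ≤ w i k) (hs : ∀ i, Summable (w i)) (ha : ∀ i, Antitone (w i))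
    (h1 : ∀ i, w i 0 ≤ 1) (hc : Tendsto c U atTop)
    (ht : Tendsto (fun i => wsum (w i) Set.univ / c i) U (𝓝 1)) :
    ∃ m, InvMean m ∧ ∀ E, Tendsto (fun i => wsum (w i) E / c i) U (𝓝 (m E)) := by
  have key : ∀ E, ∃ x, Tendsto (fun i => wsum (w i) E / c i) U (𝓝 x) := by
    intro E
    have hcpt : IsCompact (Set.Icc (0:ℝ) 2) := isCompact_Icc
    have hmem : ∀ᶠ i in (U : Filter ℕ), wsum (w i) E / c i ∈ Set.Icc (0:ℝ) 2 := by
      filter_upwards [hc.eventually_gt_atTop 0, ht.eventually_lt_const (by norm_num : (1:ℝ) < 2)]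
        with i hi hi2
      refine ⟨div_nonneg (wsum_nonneg (h0 i) E) hi.le, le_trans ?_ hi2.le⟩
      exact div_le_div_of_nonneg_right (wsum_mono (h0 i) (hs i) (Set.subset_univ _)) hi.le
    have := hcpt.ultrafilter_le_nhds (U.map (fun i => wsum (w i) E / c i))
      (by rw [Ultrafilter.coe_map]; exact Filter.le_principal_iff.2 hmem)
    obtain ⟨x, -, hx⟩ := this
    exact ⟨x, hx⟩
  choose m hm using key
  refine ⟨m, ⟨?_, ?_, ?_, ?_⟩, hm⟩
  · intro E
    refine ge_of_tendsto (hm E) ?_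
    filter_upwards [hc.eventually_gt_atTop 0] with i hi
    exact div_nonneg (wsum_nonneg (h0 i) E) hi.le
  · exact tendsto_nhds_unique (hm _) ht
  · intro E F hd
    refine tendsto_nhds_unique (hm _) (((hm E).add (hm F)).congr (fun i => ?_))
    rw [wsum_add (h0 i) (hs i) E F hd, add_div]
  · intro E
    have h3 := (hm ((fun x => x + 1) ⁻¹' E)).sub (hm E)
    have h4 : Tendsto (fun i => wsum (w i) ((fun x => x + 1) ⁻¹' E) / c i - wsum (w i) E / c i)
        U (𝓝 0) := by
      refine squeeze_zero_norm' ?_ (tendsto_inv_atTop_zero.comp hc)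
      filter_upwards [hc.eventually_gt_atTop 0] with i hi
      rw [← sub_div, Real.norm_eq_abs, abs_div, abs_of_pos hi, Function.comp, ← one_div]
      exact div_le_div_of_nonneg_right ((wsum_shift (h0 i) (hs i) (ha i) E).trans (h1 i)) hi.le
    have := tendsto_nhds_unique h3 h4
    linarith

lemma log_mean (U : Ultrafilter ℕ) (hU : (U : Filter ℕ) ≤ atTop) :
    ∃ m, InvMean m ∧ ∀ E, Tendsto (fun i => logWeight E i) U (𝓝 (m E)) := by
  set w : ℕ → ℕ → ℝ := fun n k => if k < n then ((k:ℝ)+1)⁻¹ else 0 with hw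
  have hsum : ∀ n E, wsum (w n) E = ∑ k ∈ Finset.Icc 1 n,
      E.indicator (fun m : ℤ => ((m : ℝ))⁻¹) (k : ℤ) := by
    intro n E
    unfold wsum
    rw [tsum_eq_sum (s := Finset.range n)]
    · rw [Finset.range_eq_Ico, Finset.sum_Ico_eq_sum_range]
      rw [← Finset.Ico_add_one_right_eq_Icc, Finset.sum_Ico_eq_sum_range]
      simp only [tsub_zero, Nat.add_sub_cancel]
      refine Finset.sum_congr rfl (fun k hk => ?_)
      have hk' : k < n := Finset.mem_range.1 hk
      have : ((1 + k : ℕ) : ℤ) = (k:ℤ) + 1 := by push_cast; ring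
      rw [this]
      by_cases hE : (k:ℤ) + 1 ∈ E
      · simp [hw, hk', hE]
      · simp [hE]
    · intro k hk
      have : ¬ k < n := by simpa using hk
      simp [hw, this]
  have hlog : ∀ E i, wsum (w i) E / Real.log i = logWeight E i := by
    intro E i
    rw [hsum, logWeight, div_eq_inv_mul]
  have hc : Tendsto (fun n : ℕ => Real.log n) atTop atTop :=
    Real.tendsto_log_atTop.comp tendsto_natCast_atTop_atTop
  have h := exists_mean w (fun n => Real.log n) U ?_ ?_ ?_ ?_ ?_ ?_
  · simpa only [hlog] using h
  · intro i k; simp only [hw]; split_ifs <;> positivity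
  · intro i
    refine summable_of_ne_finset_zero (s := Finset.range i) (fun k hk => ?_)
    have : ¬ k < i := by simpa using hk
    simp [hw, this]
  · intro i a b hab
    simp only [hw]
    split_ifs with h1 h2 h2
    · gcongr
    · omega
    · positivity
    · rfl
  · intro i
    simp only [hw]; split_ifs <;> simp
  · exact hc.mono_left hU
  · refine Tendsto.mono_left ?_ hU
    have h1 : ∀ n, wsum (w n) Set.univ = (harmonic n : ℝ) := by
      intro n
      rw [hsum, harmonic_eq_sum_Icc]
      push_cast
      refine Finset.sum_congr rfl (fun k hk => ?_)
      simp
    have h2 := Real.tendsto_harmonic_sub_log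
    have h3 := (h2.mul (tendsto_inv_atTop_zero.comp hc)).add_const 1
    rw [mul_zero, zero_add] at h3
    refine h3.congr' ?_
    filter_upwards [hc.eventually_gt_atTop 0] with n hn
    rw [h1]
    simp only [Function.comp]
    field_simp
    ring

open ArithmeticFunction ArithmeticFunction.Moebius ArithmeticFunction.zeta in
lemma moebius_pow_nonneg (d : ℝ) (hd : 0 ≤ d) :
    ∃ g : ℕ → ℝ, (∀ n, 0 ≤ g n) ∧ ∀ n : ℕ, n ≠ 0 →
      ∑ x ∈ n.divisorsAntidiagonal, (x.1 : ℝ) ^ (-d) * g x.2 = 1 := by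
  let F : ArithmeticFunction ℝ := ⟨fun n => if n = 0 then 0 else (n : ℝ) ^ (-d), by simp⟩
  have hF : ∀ n : ℕ, n ≠ 0 → F n = (n:ℝ)^(-d) := fun n hn => by
    simp only [F, coe_mk, if_neg hn]
  have hFm : ∀ a b : ℕ, F (a * b) = F a * F b := by
    intro a b
    by_cases ha : a = 0
    · simp [ha]
    by_cases hb : b = 0
    · simp [hb]
    rw [hF _ (mul_ne_zero ha hb), hF a ha, hF b hb]
    push_cast
    exact Real.mul_rpow (by positivity) (by positivity)
  have hF1 : F 1 = 1 := by rw [hF 1 one_ne_zero]; simp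
  have hFmul : F.IsMultiplicative := ⟨hF1, fun {a b} _ => hFm a b⟩
  let μF : ArithmeticFunction ℝ := ((μ : ArithmeticFunction ℤ) : ArithmeticFunction ℝ).pmul F
  have hμF : μF.IsMultiplicative := (isMultiplicative_moebius.intCast).pmul hFmul
  let G : ArithmeticFunction ℝ := μF * ((ζ : ArithmeticFunction ℕ) : ArithmeticFunction ℝ)
  have hGm : G.IsMultiplicative := hμF.mul (isMultiplicative_zeta.natCast)
  have hFG : F * μF = 1 := by
    ext n
    rw [mul_apply]
    have : ∀ x ∈ n.divisorsAntidiagonal, F x.1 * μF x.2 = F n * ((μ x.2 : ℤ) : ℝ) := by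
      intro x hx
      have hx' := (Nat.mem_divisorsAntidiagonal.1 hx).1
      simp only [μF, pmul_apply, intCoe_apply]
      rw [← hx', hFm]; ring
    rw [Finset.sum_congr rfl this, ← Finset.mul_sum]
    have h2 : ∑ x ∈ n.divisorsAntidiagonal, ((μ x.2 : ℤ) : ℝ) = (1 : ArithmeticFunction ℝ) n := by
      have h3 : (((ζ : ArithmeticFunction ℕ) : ArithmeticFunction ℝ) *
        ((μ : ArithmeticFunction ℤ) : ArithmeticFunction ℝ)) n = (1 : ArithmeticFunction ℝ) n := by
        rw [coe_zeta_mul_coe_moebius]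
      rw [← h3, mul_apply]
      refine Finset.sum_congr rfl (fun x hx => ?_)
      have hx0 : x.1 ≠ 0 := (Nat.pos_of_mem_divisors
        (Nat.fst_mem_divisors_of_mem_antidiagonal hx)).ne'
      simp [natCoe_apply, zeta_apply, hx0]
    rw [h2]
    by_cases hn : n = 1
    · simp [hn, hF1]
    · simp [hn]
  have hFG' : F * G = ((ζ : ArithmeticFunction ℕ) : ArithmeticFunction ℝ) := by
    simp only [G]
    rw [← mul_assoc, hFG, one_mul]
  refine ⟨G, ?_, ?_⟩
  · intro n
    by_cases hn : n = 0
    · simp [hn]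
    rw [hGm.multiplicative_factorization G hn]
    refine Finset.prod_nonneg (fun p hp => ?_)
    have hpp : p.Prime := Nat.prime_of_mem_primeFactors (by simpa using hp)
    have hk : n.factorization p ≠ 0 := Finsupp.mem_support_iff.1 hp
    obtain ⟨k, hk'⟩ := Nat.exists_eq_succ_of_ne_zero hk
    rw [hk']
    simp only [G]
    rw [coe_mul_zeta_apply]
    rw [Nat.sum_divisors_prime_pow hpp, Finset.sum_range_succ', Finset.sum_range_succ']
    have hz : ∑ x ∈ Finset.range k, μF (p ^ (x + 1 + 1)) = 0 := by
      refine Finset.sum_eq_zero (fun x _ => ?_)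
      simp only [μF, pmul_apply, intCoe_apply]
      rw [moebius_apply_prime_pow hpp (by omega)]
      simp
    rw [hz]
    simp only [μF, pmul_apply, intCoe_apply]
    simp only [zero_add, pow_one, pow_zero, moebius_apply_prime hpp, hF1]
    rw [hF p hpp.ne_zero]
    have : (p:ℝ)^(-d) ≤ 1 := Real.rpow_le_one_of_one_le_of_nonpos
      (by exact_mod_cast hpp.one_lt.le) (by linarith)
    simp
    linarith
  · intro n hn
    have h := congrArg (fun f : ArithmeticFunction ℝ => f n) hFG'
    simp only [mul_apply, natCoe_apply, zeta_apply, hn, if_false] at h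
    rw [Nat.cast_one] at h
    rw [← h]
    refine Finset.sum_congr rfl (fun x hx => ?_)
    have hx0 : x.1 ≠ 0 := (Nat.pos_of_mem_divisors
        (Nat.fst_mem_divisors_of_mem_antidiagonal hx)).ne'
    rw [hF _ hx0]

open scoped ENNReal in
def Zs (s : ℝ) (M : Set ℕ+) : ℝ≥0∞ :=
  ∑' n : ℕ+, M.indicator (fun n : ℕ+ => ENNReal.ofReal (((n:ℕ):ℝ) ^ (-s))) n

open scoped ENNReal in
lemma Zs_mono (s s' : ℝ) (h : s ≤ s') (M : Set ℕ+) (hM : ∀ k ∈ M, ∀ r : ℕ+, k * r ∈ M) :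
    Zs s' M * Zs s Set.univ ≤ Zs s M * Zs s' Set.univ := by
  obtain ⟨g, hg0, hg⟩ := moebius_pow_nonneg (s' - s) (by linarith)
  let a : ℕ+ → ℝ≥0∞ := fun k => ENNReal.ofReal (((k:ℕ):ℝ) ^ (-s'))
  let b : ℕ+ → ℝ≥0∞ := fun r => ENNReal.ofReal (((r:ℕ):ℝ) ^ (-s) * g r)
  have key : ∀ M : Set ℕ+, Zs s M = ∑' k : ℕ+, ∑' r : ℕ+,
      M.indicator (fun _ => (1 : ℝ≥0∞)) (k * r) * (a k * b r) := by
    intro M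
    have e1 : ∀ n : ℕ+, M.indicator (fun n : ℕ+ => ENNReal.ofReal (((n:ℕ):ℝ) ^ (-s))) n =
        ∑' x : Nat.divisorsAntidiagonal n, M.indicator (fun _ => (1 : ℝ≥0∞)) n *
          ENNReal.ofReal (((x.1.1:ℕ):ℝ) ^ (-s') * (((x.1.2:ℕ):ℝ) ^ (-s) * g x.1.2)) := by
      intro n
      rw [ENNReal.tsum_mul_left]
      have : ∑' x : Nat.divisorsAntidiagonal n,
          ENNReal.ofReal (((x.1.1:ℕ):ℝ) ^ (-s') * (((x.1.2:ℕ):ℝ) ^ (-s) * g x.1.2)) =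
          ENNReal.ofReal (((n:ℕ):ℝ) ^ (-s)) := by
        rw [Finset.tsum_subtype (Nat.divisorsAntidiagonal n) (fun x : ℕ × ℕ =>
          ENNReal.ofReal (((x.1:ℕ):ℝ) ^ (-s') * (((x.2:ℕ):ℝ) ^ (-s) * g x.2)))]
        rw [← ENNReal.ofReal_sum_of_nonneg]
        · congr 1
          rw [← mul_one (((n:ℕ):ℝ) ^ (-s)), ← hg n n.ne_zero, Finset.mul_sum]
          refine Finset.sum_congr rfl (fun x hx => ?_)
          have hx' := (Nat.mem_divisorsAntidiagonal.1 hx).1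
          have hx1 : x.1 ≠ 0 := (Nat.pos_of_mem_divisors
            (Nat.fst_mem_divisors_of_mem_antidiagonal hx)).ne'
          have hx1' : (0:ℝ) < x.1 := by exact_mod_cast Nat.pos_of_ne_zero hx1
          rw [← hx']
          push_cast
          rw [Real.mul_rpow (by positivity) (by positivity)]
          have : (x.1:ℝ) ^ (-s') = (x.1:ℝ)^(-s) * (x.1:ℝ)^(-(s'-s)) := by
            rw [← Real.rpow_add hx1']; congr 1; ring
          rw [this]; ring
        · intro x _
          have := hg0 x.2
          positivity
      rw [this]
      by_cases hn : n ∈ M <;> simp [hn]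
    unfold Zs
    simp_rw [e1]
    rw [← ENNReal.tsum_sigma, ← ENNReal.tsum_prod]
    rw [← sigmaAntidiagonalEquivProd.symm.tsum_eq]
    refine tsum_congr (fun x => ?_)
    obtain ⟨k, r⟩ := x
    have e3 : (sigmaAntidiagonalEquivProd.symm (k, r)).1 = k * r := rfl
    have e4 : ((sigmaAntidiagonalEquivProd.symm (k, r)).2 : ℕ × ℕ) = ((k:ℕ), (r:ℕ)) := rfl
    simp only [e3, e4, a, b]
    rw [ENNReal.ofReal_mul (by positivity)]
  have hu : Zs s Set.univ = Zs s' Set.univ * ∑' r, b r := by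
    rw [key]
    simp only [Set.indicator_univ, one_mul, ENNReal.tsum_mul_left, ENNReal.tsum_mul_right]
    simp [Zs, a]
  have hm : Zs s' M * ∑' r, b r ≤ Zs s M := by
    rw [key]
    unfold Zs
    rw [← ENNReal.tsum_mul_right]
    refine ENNReal.tsum_le_tsum (fun k => ?_)
    rw [← ENNReal.tsum_mul_left]
    refine ENNReal.tsum_le_tsum (fun r => ?_)
    by_cases hk : k ∈ M
    · simp [hk, hM k hk r, a]
    · simp [hk]
  rw [hu]
  calc Zs s' M * (Zs s' Set.univ * ∑' r, b r) = (Zs s' M * ∑' r, b r) * Zs s' Set.univ := by ring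
    _ ≤ _ := by gcongr

def zw (n : ℕ) (k : ℕ) : ℝ := ((k:ℝ)+1) ^ (-(1 + 1 / ((n:ℝ)+1)))

lemma zw_nonneg (n k : ℕ) : 0 ≤ zw n k := by unfold zw; positivity

lemma zw_summable (n : ℕ) : Summable (zw n) := by
  have h : Summable (fun k : ℕ => (k:ℝ) ^ (-(1 + 1 / ((n:ℝ)+1)))) := by
    rw [Real.summable_nat_rpow]
    have : 0 < 1 / ((n:ℝ)+1) := by positivity
    linarith
  have := (summable_nat_add_iff 1).2 h
  refine this.congr (fun k => ?_)
  simp [zw]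

lemma zw_anti (n : ℕ) : Antitone (zw n) := by
  intro a b hab
  unfold zw
  refine Real.rpow_le_rpow_of_nonpos (by positivity) (by gcongr) ?_
  have : 0 < 1 / ((n:ℝ)+1) := by positivity
  linarith

lemma wsum_eq_Zs (n : ℕ) (E : Set ℤ) :
    ENNReal.ofReal (wsum (zw n) E) = Zs (1 + 1 / ((n:ℝ)+1)) {k : ℕ+ | ((k:ℕ):ℤ) ∈ E} := by
  unfold wsum Zs
  rw [ENNReal.ofReal_tsum_of_nonneg (fun k => mul_nonneg (ind_nonneg _ _) (zw_nonneg n k))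
    (wsum_summable (zw_nonneg n) (zw_summable n) _ E)]
  rw [← Equiv.pnatEquivNat.symm.tsum_eq]
  refine tsum_congr (fun k => ?_)
  have e : ((Equiv.pnatEquivNat.symm k : ℕ+) : ℕ) = k + 1 := rfl
  by_cases h : (k:ℤ) + 1 ∈ E
  · rw [Set.indicator_of_mem, Set.indicator_of_mem]
    · simp [zw, e]
    · simp only [Set.mem_ofPred_eq, e]; exact_mod_cast h
    · exact h
  · rw [Set.indicator_of_notMem, Set.indicator_of_notMem]
    · simp
    · simp only [Set.mem_ofPred_eq, e]; exact_mod_cast h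
    · exact h

lemma wsum_univ_pos (n : ℕ) : 0 < wsum (zw n) Set.univ := by
  unfold wsum
  refine (wsum_summable (zw_nonneg n) (zw_summable n) _ Set.univ).tsum_pos
    (fun k => mul_nonneg (ind_nonneg _ _) (zw_nonneg n k)) 0 ?_
  simp [zw]

lemma wsum_univ_tendsto : Tendsto (fun n => wsum (zw n) Set.univ) atTop atTop := by
  have h1 : Tendsto (fun n : ℕ => 1 / ((n:ℝ)+1)) atTop (𝓝 0) :=
    tendsto_one_div_add_atTop_nhds_zero_nat
  have h2 : Tendsto (fun n : ℕ => 1 + 1 / ((n:ℝ)+1)) atTop (𝓝[>] 1) := by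
    rw [tendsto_nhdsWithin_iff]
    refine ⟨by simpa using h1.const_add 1, Eventually.of_forall (fun n => ?_)⟩
    have : 0 < 1 / ((n:ℝ)+1) := by positivity
    simp only [Set.mem_Ioi]; linarith
  have h3 := tendsto_sub_mul_tsum_nat_rpow.comp h2
  have h4 : Tendsto (fun n : ℕ => (n:ℝ) + 1) atTop atTop :=
    tendsto_atTop_add_const_right _ _ tendsto_natCast_atTop_atTop
  have h5 := h4.atTop_mul_pos one_pos h3
  refine h5.congr (fun n => ?_)
  simp only [Function.comp]
  have hs : Summable (fun k : ℕ => 1 / (k:ℝ) ^ (1 + 1 / ((n:ℝ)+1))) := by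
    rw [Real.summable_one_div_nat_rpow]
    have : 0 < 1 / ((n:ℝ)+1) := by positivity
    linarith
  rw [hs.tsum_eq_zero_add]
  have hp : (0:ℝ) < (n:ℝ) + 1 := by positivity
  have h0 : (1 + 1 / ((n:ℝ)+1)) ≠ 0 := by positivity
  have : ∑' k : ℕ, 1 / (((k+1:ℕ)):ℝ) ^ (1 + 1 / ((n:ℝ)+1)) = wsum (zw n) Set.univ := by
    unfold wsum
    refine tsum_congr (fun k => ?_)
    simp only [Set.indicator_univ, Pi.one_apply, one_mul, zw]
    rw [Real.rpow_neg (by positivity)]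
    push_cast
    rw [one_div]
  rw [this]
  simp only [Nat.cast_zero, Real.zero_rpow h0]
  field_simp
  ring

lemma wsum_ratio_mono (C : Set ℕ) {i j : ℕ} (hij : i ≤ j) :
    wsum (zw i) (multiplesZ C) / wsum (zw i) Set.univ ≤
    wsum (zw j) (multiplesZ C) / wsum (zw j) Set.univ := by
  rw [div_le_div_iff₀ (wsum_univ_pos i) (wsum_univ_pos j)]
  have h := Zs_mono (1 + 1 / ((j:ℝ)+1)) (1 + 1 / ((i:ℝ)+1)) (by gcongr)
    {k : ℕ+ | ((k:ℕ):ℤ) ∈ multiplesZ C} ?_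
  · have e : (Set.univ : Set ℕ+) = {k : ℕ+ | ((k:ℕ):ℤ) ∈ (Set.univ : Set ℤ)} := by simp
    rw [e, ← wsum_eq_Zs, ← wsum_eq_Zs, ← wsum_eq_Zs, ← wsum_eq_Zs,
      ← ENNReal.ofReal_mul (wsum_nonneg (zw_nonneg _) _),
      ← ENNReal.ofReal_mul (wsum_nonneg (zw_nonneg _) _)] at h
    rwa [ENNReal.ofReal_le_ofReal_iff] at h
    exact mul_nonneg (wsum_nonneg (zw_nonneg _) _) (wsum_nonneg (zw_nonneg _) _)
  · rintro k ⟨b, hb, hk⟩ r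
    refine ⟨b, hb, ?_⟩
    push_cast
    exact Dvd.dvd.mul_right hk _

lemma wsum_finite_approx (n : ℕ) (C : Set ℕ) (e : ℝ) (he : 0 < e) :
    ∃ A : Finset ℕ, (A : Set ℕ) ⊆ C ∧
      wsum (zw n) (multiplesZ C) < wsum (zw n) (multiplesZ (A : Set ℕ)) + e := by
  have hs := wsum_summable (zw_nonneg n) (zw_summable n) (fun k => (k:ℤ)+1) (multiplesZ C)
  have hlt : wsum (zw n) (multiplesZ C) - e < wsum (zw n) (multiplesZ C) := by linarith
  obtain ⟨T, hT⟩ := ((hs.hasSum).eventually_const_lt hlt).exists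
  have hch : ∀ k : ℕ, ∃ b : ℕ, ((k:ℤ)+1 ∈ multiplesZ C → b ∈ C ∧ (b:ℤ) ∣ (k:ℤ)+1) := by
    intro k
    by_cases h : (k:ℤ)+1 ∈ multiplesZ C
    · obtain ⟨b, hb, hd⟩ := h
      exact ⟨b, fun _ => ⟨hb, hd⟩⟩
    · exact ⟨0, fun h' => absurd h' h⟩
  choose f hf using hch
  refine ⟨(T.filter (fun k : ℕ => (k:ℤ)+1 ∈ multiplesZ C)).image f, ?_, ?_⟩
  · intro b hb
    simp only [Finset.coe_image, Set.mem_image, Finset.mem_coe, Finset.mem_filter] at hb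
    obtain ⟨k, ⟨_, hk⟩, rfl⟩ := hb
    exact (hf k hk).1
  · set A := (T.filter (fun k : ℕ => (k:ℤ)+1 ∈ multiplesZ C)).image f with hA
    have hs2 := wsum_summable (zw_nonneg n) (zw_summable n) (fun k => (k:ℤ)+1)
      (multiplesZ (A : Set ℕ))
    have h1 : ∑ k ∈ T, (multiplesZ C).indicator (1 : ℤ → ℝ) ((k:ℤ)+1) * zw n k ≤
        ∑ k ∈ T, (multiplesZ (A : Set ℕ)).indicator (1 : ℤ → ℝ) ((k:ℤ)+1) * zw n k := by
      refine Finset.sum_le_sum (fun k hk => mul_le_mul_of_nonneg_right ?_ (zw_nonneg n k))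
      by_cases h : (k:ℤ)+1 ∈ multiplesZ C
      · have : (k:ℤ)+1 ∈ multiplesZ (A : Set ℕ) := by
          refine ⟨f k, ?_, (hf k h).2⟩
          rw [hA]
          exact Finset.mem_coe.2 (Finset.mem_image_of_mem f (Finset.mem_filter.2 ⟨hk, h⟩))
        simp [h, this]
      · rw [Set.indicator_of_notMem h]; exact ind_nonneg _ _
    have h2 : ∑ k ∈ T, (multiplesZ (A : Set ℕ)).indicator (1 : ℤ → ℝ) ((k:ℤ)+1) * zw n k ≤
        wsum (zw n) (multiplesZ (A : Set ℕ)) :=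
      hs2.sum_le_tsum T (fun k _ => mul_nonneg (ind_nonneg _ _) (zw_nonneg n k))
    linarith

/-- Davenport-Erdos for the mean built from the zeta weights. -/
lemma zeta_mean : ∃ m, InvMean m ∧ ∀ C : Set ℕ, ∀ e : ℝ, 0 < e →
    ∃ A : Finset ℕ, (A : Set ℕ) ⊆ C ∧ m (multiplesZ C) < m (multiplesZ (A : Set ℕ)) + e := by
  obtain ⟨m, hm, hlim⟩ := exists_mean zw (fun n => wsum (zw n) Set.univ) (hyperfilter ℕ)
    zw_nonneg zw_summable zw_anti (fun i => by simp [zw])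
    (wsum_univ_tendsto.mono_left Nat.hyperfilter_le_atTop)
    (tendsto_const_nhds.congr (fun i => (div_self (wsum_univ_pos i).ne').symm))
  refine ⟨m, hm, fun C e he => ?_⟩
  obtain ⟨n, hn⟩ := ((hlim (multiplesZ C)).eventually_const_lt
    (show m (multiplesZ C) - e / 2 < m (multiplesZ C) by linarith)).exists
  have hp := wsum_univ_pos n
  obtain ⟨A, hAC, hA⟩ := wsum_finite_approx n C (e / 2 * wsum (zw n) Set.univ) (by positivity)
  refine ⟨A, hAC, ?_⟩
  have h1 : wsum (zw n) (multiplesZ (A : Set ℕ)) / wsum (zw n) Set.univ ≤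
      m (multiplesZ (A : Set ℕ)) := by
    refine ge_of_tendsto (hlim _) ?_
    refine Filter.Eventually.filter_mono Nat.hyperfilter_le_atTop ?_
    filter_upwards [eventually_ge_atTop n] with j hj
    exact wsum_ratio_mono _ hj
  have h2 : wsum (zw n) (multiplesZ C) / wsum (zw n) Set.univ <
      wsum (zw n) (multiplesZ (A : Set ℕ)) / wsum (zw n) Set.univ + e / 2 := by
    rw [div_lt_iff₀ hp, add_mul, div_mul_cancel₀ _ hp.ne']
    exact hA
  linarith

namespace InvMean

variable {m : Set ℤ → ℝ}

lemma empty (h : InvMean m) : m ∅ = 0 := by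
  have := h.add ∅ ∅ (by simp)
  simp at this
  exact this

lemma diff (h : InvMean m) {E F : Set ℤ} (hEF : E ⊆ F) : m (F \ E) = m F - m E := by
  have := h.add E (F \ E) Set.disjoint_sdiff_right
  rw [Set.union_sdiff_cancel hEF] at this
  linarith

lemma mono (h : InvMean m) {E F : Set ℤ} (hEF : E ⊆ F) : m E ≤ m F := by
  have := h.diff hEF
  have := h.nonneg (F \ E)
  linarith

lemma union_le (h : InvMean m) (E F : Set ℤ) : m (E ∪ F) ≤ m E + m F := by
  have h1 := h.add E (F \ E) Set.disjoint_sdiff_right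
  rw [Set.union_sdiff_self] at h1
  have := h.mono (Set.sdiff_subset : F \ E ⊆ F)
  linarith

lemma compl (h : InvMean m) (E : Set ℤ) : m Eᶜ = 1 - m E := by
  rw [Set.compl_eq_univ_sdiff, h.diff (Set.subset_univ _), h.univ]

lemma biUnion_le (h : InvMean m) {ι : Type*} (s : Finset ι) (f : ι → Set ℤ) :
    m (⋃ i ∈ s, f i) ≤ ∑ i ∈ s, m (f i) := by
  induction s using Finset.induction_on with
  | empty => simp [h.empty]
  | insert a s ha ih =>
    rw [Finset.set_biUnion_insert, Finset.sum_insert ha]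
    exact (h.union_le _ _).trans (by linarith)

lemma biUnion (h : InvMean m) {ι : Type*} (s : Finset ι) (f : ι → Set ℤ)
    (hd : ∀ i ∈ s, ∀ j ∈ s, i ≠ j → Disjoint (f i) (f j)) :
    m (⋃ i ∈ s, f i) = ∑ i ∈ s, m (f i) := by
  induction s using Finset.induction_on with
  | empty => simp [h.empty]
  | insert a s ha ih =>
    rw [Finset.set_biUnion_insert, Finset.sum_insert ha, h.add, ih]
    · exact fun i hi j hj => hd i (Finset.mem_insert_of_mem hi) j (Finset.mem_insert_of_mem hj)
    · simp only [Set.disjoint_iUnion_right]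
      intro i hi
      exact hd a (Finset.mem_insert_self _ _) i (Finset.mem_insert_of_mem hi)
        (fun e => ha (e ▸ hi))

lemma shift_nat (h : InvMean m) (a : ℕ) (E : Set ℤ) : m ((fun x => x + (a:ℤ)) ⁻¹' E) = m E := by
  induction a with
  | zero => simp
  | succ a ih =>
    rw [← ih, ← h.shift ((fun x => x + (a:ℤ)) ⁻¹' E)]
    congr 1
    ext x
    simp only [Set.mem_preimage]
    push_cast
    rw [show x + ((a:ℤ) + 1) = x + 1 + a by ring]

lemma shift_int (h : InvMean m) (a : ℤ) (E : Set ℤ) : m ((fun x => x + a) ⁻¹' E) = m E := by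
  obtain ⟨n, rfl | rfl⟩ := a.eq_nat_or_neg
  · exact h.shift_nat n E
  · rw [← h.shift_nat n]
    congr 1
    ext x
    simp

lemma sum_residues (h : InvMean m) (q : ℕ) (hq : 0 < q) (X : Set ℤ) :
    m X = ∑ a ∈ Finset.range q, m (X ∩ {x | (q:ℤ) ∣ x - (a:ℤ)}) := by
  rw [← h.biUnion]
  · congr 1
    ext x
    simp only [Set.mem_iUnion, Set.mem_inter_iff, Set.mem_ofPred_eq, Finset.mem_range]
    constructor
    · intro hx
      have hq' : (0:ℤ) < q := by exact_mod_cast hq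
      refine ⟨(x % q).toNat, ?_, hx, ?_⟩
      · have := Int.emod_lt_of_pos x hq'
        have := Int.emod_nonneg x hq'.ne'
        omega
      · rw [Int.toNat_of_nonneg (Int.emod_nonneg x hq'.ne')]
        exact Int.dvd_self_sub_emod
    · rintro ⟨a, _, hx, _⟩
      exact hx
  · intro i hi j hj hij
    rw [Set.disjoint_left]
    rintro x ⟨_, hx⟩ ⟨_, hx'⟩
    simp only [Set.mem_ofPred_eq] at hx hx'
    rw [Finset.mem_range] at hi hj
    have hd : (q:ℤ) ∣ (i:ℤ) - j := by
      have := dvd_sub hx' hx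
      rwa [show x - (j:ℤ) - (x - i) = (i:ℤ) - j by ring] at this
    have := Int.eq_zero_of_abs_lt_dvd hd (by rw [abs_lt]; constructor <;> omega)
    omega

lemma class_mean (h : InvMean m) (q : ℕ) (hq : 0 < q) (a : ℤ) :
    m {x | (q:ℤ) ∣ x - a} = 1 / q := by
  have h1 : ∀ a : ℤ, m {x | (q:ℤ) ∣ x - a} = m {x | (q:ℤ) ∣ x} := by
    intro a
    rw [← h.shift_int (-a) {x | (q:ℤ) ∣ x}]
    rfl
  have h2 := h.sum_residues q hq Set.univ
  simp only [Set.univ_inter, h1, h.univ, Finset.sum_const, Finset.card_range, nsmul_eq_mul] at h2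
  rw [h1]
  field_simp
  linarith

lemma periodic_mul {E : Set ℤ} {q : ℕ} (hE : ∀ x, x ∈ E ↔ x + q ∈ E) (x t : ℤ) :
    x ∈ E ↔ x + q * t ∈ E := by
  induction t using Int.induction_on with
  | zero => simp
  | succ i ih => rw [ih, hE]; ring_nf
  | pred i ih => rw [ih, hE (x + q * (-i - 1))]; ring_nf

lemma periodic_eq (h : InvMean m) {m' : Set ℤ → ℝ} (h' : InvMean m') {E : Set ℤ} {q : ℕ}
    (hq : 0 < q) (hE : ∀ x, x ∈ E ↔ x + q ∈ E) : m E = m' E := by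
  rw [h.sum_residues q hq, h'.sum_residues q hq]
  refine Finset.sum_congr rfl (fun a _ => ?_)
  by_cases ha : (a:ℤ) ∈ E
  · have : E ∩ {x | (q:ℤ) ∣ x - a} = {x | (q:ℤ) ∣ x - a} := by
      refine Set.inter_eq_right.2 ?_
      rintro x ⟨t, ht⟩
      rw [show x = a + q * t by linarith]
      exact (periodic_mul hE _ _).1 ha
    rw [this, h.class_mean q hq, h'.class_mean q hq]
  · have : E ∩ {x | (q:ℤ) ∣ x - a} = ∅ := by
      ext x
      simp only [Set.mem_inter_iff, Set.mem_empty_iff_false, iff_false, not_and]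
      rintro hx ⟨t, ht⟩
      rw [show x = a + q * t by linarith] at hx
      exact ha ((periodic_mul hE _ _).2 hx)
    rw [this, h.empty, h'.empty]

end InvMean

/-- The mean rescaled to a residue class. -/
def scl (m : Set ℤ → ℝ) (d : ℕ) (E : Set ℤ) : ℝ := d * m ((fun t => (d:ℤ) * t) '' E)

lemma scl_mean {m : Set ℤ → ℝ} (h : InvMean m) (d : ℕ) (hd : 0 < d) : InvMean (scl m d) := by
  have hd' : (d:ℤ) ≠ 0 := by exact_mod_cast hd.ne'
  have hinj : Function.Injective (fun t : ℤ => (d:ℤ) * t) := fun a b hab =>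
    mul_left_cancel₀ hd' hab
  refine ⟨fun E => mul_nonneg (by positivity) (h.nonneg _), ?_, ?_, ?_⟩
  · have : ((fun t : ℤ => (d:ℤ) * t) '' Set.univ) = {x | (d:ℤ) ∣ x - 0} := by
      ext x
      simp only [Set.image_univ, Set.mem_range, Set.mem_ofPred_eq, sub_zero]
      constructor
      · rintro ⟨t, rfl⟩; exact dvd_mul_right _ _
      · rintro ⟨t, rfl⟩; exact ⟨t, rfl⟩
    rw [scl, this, h.class_mean d hd]
    field_simp
  · intro E F hEF
    unfold scl
    rw [Set.image_union, h.add _ _ ((Set.disjoint_image_iff hinj).2 hEF)]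
    ring
  · intro E
    unfold scl
    rw [← h.shift_int d ((fun t => (d:ℤ) * t) '' E)]
    congr 2
    ext x
    simp only [Set.mem_image, Set.mem_preimage]
    constructor
    · rintro ⟨t, ht, rfl⟩
      exact ⟨t + 1, ht, by ring⟩
    · rintro ⟨t, ht, hx⟩
      exact ⟨t - 1, by simpa using ht, by linarith⟩

lemma scl_class {m : Set ℤ → ℝ} (h : InvMean m) (d : ℕ) (a : ℤ) (F : Set ℤ) :
    scl m d {t | a + d * t ∈ F} = d * m (F ∩ {x | (d:ℤ) ∣ x - a}) := by
  unfold scl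
  rw [← h.shift_int a (F ∩ {x | (d:ℤ) ∣ x - a})]
  congr 2
  ext x
  simp only [Set.mem_image, Set.mem_preimage, Set.mem_inter_iff, Set.mem_ofPred_eq]
  constructor
  · rintro ⟨t, ht, rfl⟩
    exact ⟨by rwa [add_comm], ⟨t, by ring⟩⟩
  · rintro ⟨hx, t, ht⟩
    have : x = d * t := by linarith
    subst this
    exact ⟨t, by rwa [add_comm], rfl⟩

lemma multiples_periodic (A : Finset ℕ) (x : ℤ) :
    x ∈ multiplesZ (A : Set ℕ) ↔ x + (∏ a ∈ A, a : ℕ) ∈ multiplesZ (A : Set ℕ) := by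
  unfold multiplesZ
  simp only [Set.mem_ofPred_eq]
  refine exists_congr (fun b => and_congr_right (fun hb => ?_))
  have : (b:ℤ) ∣ ((∏ a ∈ A, a : ℕ) : ℤ) := by
    exact_mod_cast Finset.dvd_prod_of_mem (fun a => a) hb
  rw [Int.dvd_add_left this]

lemma multiples_affine (A : Finset ℕ) (Q : ℕ) (hQ : ∀ a ∈ A, Nat.Coprime Q a) (a0 : ℤ) :
    ∃ u : ℤ, {t : ℤ | a0 + Q * t ∈ multiplesZ (A : Set ℕ)} =
      (fun t => t + u) ⁻¹' multiplesZ (A : Set ℕ) := by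
  have hcop : Nat.Coprime Q (∏ a ∈ A, a) := Nat.Coprime.prod_right hQ
  obtain ⟨r, s, hrs⟩ := Nat.isCoprime_iff_coprime.2 hcop
  refine ⟨r * a0, ?_⟩
  ext t
  unfold multiplesZ
  simp only [Set.mem_ofPred_eq, Set.mem_preimage]
  refine exists_congr (fun b => and_congr_right (fun hb => ?_))
  have hb' : (b:ℤ) ∣ ((∏ a ∈ A, a : ℕ) : ℤ) := by
    exact_mod_cast Finset.dvd_prod_of_mem (fun a => a) hb
  have hcb : IsCoprime (b:ℤ) (Q:ℤ) := (Nat.isCoprime_iff_coprime.2 (hQ b hb)).symm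
  have e : a0 + Q * t = Q * (t + r * a0) + ((∏ a ∈ A, a : ℕ) : ℤ) * (s * a0) := by
    linear_combination (-a0) * hrs
  rw [e, Int.dvd_add_left (hb'.mul_right _)]
  exact ⟨fun h => hcb.dvd_of_dvd_mul_left h, fun h => h.mul_left _⟩

lemma multiples_mean_eq {m m' : Set ℤ → ℝ} (h : InvMean m) (h' : InvMean m') (A : Finset ℕ)
    (h0 : 0 ∉ A) : m (multiplesZ (A : Set ℕ)) = m' (multiplesZ (A : Set ℕ)) :=
  h.periodic_eq h' (q := ∏ a ∈ A, a)
    (Finset.prod_pos (fun a ha => Nat.pos_of_ne_zero (fun e => h0 (e ▸ ha))))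
    (multiples_periodic A)

lemma scl_multiples {m : Set ℤ → ℝ} (h : InvMean m) (A : Finset ℕ) (h0 : 0 ∉ A)
    (Q : ℕ) (hQ0 : 0 < Q) (hQ : ∀ a ∈ A, Nat.Coprime Q a) (a0 : ℤ) :
    scl m Q {t : ℤ | a0 + Q * t ∈ multiplesZ (A : Set ℕ)} = m (multiplesZ (A : Set ℕ)) := by
  obtain ⟨u, hu⟩ := multiples_affine A Q hQ a0
  rw [hu, (scl_mean h Q hQ0).shift_int, multiples_mean_eq (scl_mean h Q hQ0) h A h0]

lemma indep {m : Set ℤ → ℝ} (h : InvMean m) (A₁ A₂ : Finset ℕ) (h1 : 0 ∉ A₁) (h2 : 0 ∉ A₂)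
    (hc : ∀ a ∈ A₁, ∀ b ∈ A₂, Nat.Coprime a b) :
    m (multiplesZ ((A₁ ∪ A₂ : Finset ℕ) : Set ℕ))ᶜ =
      m (multiplesZ (A₁ : Set ℕ))ᶜ * m (multiplesZ (A₂ : Set ℕ))ᶜ := by
  have hq : 0 < ∏ a ∈ A₁, a :=
    Finset.prod_pos (fun a ha => Nat.pos_of_ne_zero (fun e => h1 (e ▸ ha)))
  have hQ : ∀ b ∈ A₂, Nat.Coprime (∏ a ∈ A₁, a) b :=
    fun b hb => Nat.Coprime.prod_left (fun _ ha => hc _ ha b hb)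
  set q := ∏ a ∈ A₁, a with hqdef
  have hU : (multiplesZ ((A₁ ∪ A₂ : Finset ℕ) : Set ℕ))ᶜ =
      (multiplesZ (A₁ : Set ℕ))ᶜ ∩ (multiplesZ (A₂ : Set ℕ))ᶜ := by
    rw [← Set.compl_union]
    congr 1
    ext x
    simp only [multiplesZ, Finset.coe_union, Set.mem_ofPred_eq, Set.mem_union, or_and_right,
      exists_or]
  rw [hU, h.sum_residues q hq, h.sum_residues q hq (multiplesZ (A₁ : Set ℕ))ᶜ, Finset.sum_mul]
  refine Finset.sum_congr rfl (fun a _ => ?_)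
  have hper := multiples_periodic A₁
  have hq0 : (q:ℝ) ≠ 0 := by exact_mod_cast hq.ne'
  by_cases ha : (a:ℤ) ∈ multiplesZ (A₁ : Set ℕ)
  · have : (multiplesZ (A₁ : Set ℕ))ᶜ ∩ {x | (q:ℤ) ∣ x - a} = ∅ := by
      ext x
      simp only [Set.mem_inter_iff, Set.mem_empty_iff_false, iff_false, not_and]
      rintro hx ⟨t, ht⟩
      rw [show x = a + q * t by linarith] at hx
      exact hx ((InvMean.periodic_mul hper _ _).1 ha)
    rw [Set.inter_right_comm, this]
    simp [h.empty]
  · have : (multiplesZ (A₁ : Set ℕ))ᶜ ∩ {x | (q:ℤ) ∣ x - a} = {x | (q:ℤ) ∣ x - a} := by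
      refine Set.inter_eq_right.2 ?_
      rintro x ⟨t, ht⟩
      rw [show x = a + q * t by linarith]
      exact fun hx => ha ((InvMean.periodic_mul hper _ _).2 hx)
    rw [Set.inter_right_comm, this, h.class_mean q hq, Set.inter_comm]
    have h3 := scl_class h q a (multiplesZ (A₂ : Set ℕ))ᶜ
    have h4 := scl_multiples h A₂ h2 q hq hQ a
    have h5 := (scl_mean h q hq).compl {t : ℤ | (a:ℤ) + q * t ∈ multiplesZ (A₂ : Set ℕ)}
    rw [h4, ← h.compl] at h5
    have h6 : {t : ℤ | (a:ℤ) + q * t ∈ multiplesZ (A₂ : Set ℕ)}ᶜ =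
      {t : ℤ | (a:ℤ) + q * t ∈ (multiplesZ (A₂ : Set ℕ))ᶜ} := rfl
    rw [h6, h3] at h5
    rw [← h5]
    field_simp

def Cset (B : Set ℕ) (d N : ℕ) : Set ℕ :=
  {c | 1 < c ∧ d * c ∈ B ∧ ∀ p : ℕ, p.Prime → p ∣ c → N < p}

lemma Cset_anti (B : Set ℕ) (d : ℕ) {N N' : ℕ} (h : N ≤ N') : Cset B d N' ⊆ Cset B d N :=
  fun _ hc => ⟨hc.1, hc.2.1, fun p hp hpc => h.trans_lt (hc.2.2 p hp hpc)⟩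

lemma multiplesZ_mono {C D : Set ℕ} (h : C ⊆ D) : multiplesZ C ⊆ multiplesZ D :=
  fun _ ⟨b, hb, hd⟩ => ⟨b, h hb, hd⟩

def DE (m : Set ℤ → ℝ) : Prop := ∀ C : Set ℕ, ∀ e : ℝ, 0 < e →
    ∃ A : Finset ℕ, (A : Set ℕ) ⊆ C ∧ m (multiplesZ C) < m (multiplesZ (A : Set ℕ)) + e

lemma zero_one {m : Set ℤ → ℝ} (h : InvMean m) (hDE : DE m) (B : Set ℕ) (d : ℕ) (e : ℝ)
    (he : 0 < e) (hN : ∀ N, e ≤ m (multiplesZ (Cset B d N))) (j : ℕ) :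
    ∀ N, ∃ A : Finset ℕ, (A : Set ℕ) ⊆ Cset B d N ∧
      m (multiplesZ (A : Set ℕ))ᶜ ≤ (1 - e / 2) ^ j := by
  induction j with
  | zero =>
    intro N
    refine ⟨∅, by simp, ?_⟩
    rw [h.compl, pow_zero]
    linarith [h.nonneg (multiplesZ ((∅ : Finset ℕ) : Set ℕ))]
  | succ j ih =>
    intro N
    obtain ⟨A₁, hA₁, hm₁⟩ := ih N
    set N' := max N (A₁.sup id) with hN'
    obtain ⟨A₂, hA₂, hm₂⟩ := hDE (Cset B d N') (e / 2) (by linarith)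
    refine ⟨A₁ ∪ A₂, ?_, ?_⟩
    · rw [Finset.coe_union]
      exact Set.union_subset hA₁ (hA₂.trans (Cset_anti B d (le_max_left _ _)))
    · rw [indep h]
      · rw [pow_succ]
        have h2 : m (multiplesZ (A₂ : Set ℕ))ᶜ ≤ 1 - e / 2 := by
          rw [h.compl]
          have := hN N'
          linarith
        exact mul_le_mul hm₁ h2 (h.nonneg _) ((h.nonneg _).trans hm₁)
      · intro h0
        have := (hA₁ h0).1
        omega
      · intro h0
        have := (hA₂ h0).1
        omega
      · intro a ha b hb
        refine Nat.Coprime.symm (Nat.coprime_of_dvd ?_)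
        intro p hp hpb hpa
        have h1 := (hA₂ hb).2.2 p hp hpb
        have h2 := Nat.le_of_dvd (by have := (hA₁ ha).1; omega) hpa
        have h3 : a ≤ A₁.sup id := Finset.le_sup (f := id) ha
        have h4 : A₁.sup id ≤ N' := le_max_right _ _
        omega

lemma logWeight_nonneg (E : Set ℤ) (n : ℕ) : 0 ≤ logWeight E n := by
  unfold logWeight
  refine mul_nonneg (inv_nonneg.2 (Real.log_natCast_nonneg n)) (Finset.sum_nonneg (fun k _ => ?_))
  by_cases hk : (k:ℤ) ∈ E <;> simp [hk]

lemma logWeight_bdd (E : Set ℤ) : IsBoundedUnder (· ≤ ·) atTop (logWeight E) := by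
  have hc : Tendsto (fun n : ℕ => Real.log n) atTop atTop :=
    Real.tendsto_log_atTop.comp tendsto_natCast_atTop_atTop
  refine ⟨2, ?_⟩
  rw [eventually_map]
  filter_upwards [hc.eventually_ge_atTop 1] with n hn
  unfold logWeight
  have h1 : ∑ k ∈ Finset.Icc 1 n, E.indicator (fun m : ℤ => ((m : ℝ))⁻¹) (k : ℤ) ≤
      (harmonic n : ℝ) := by
    rw [harmonic_eq_sum_Icc]
    push_cast
    refine Finset.sum_le_sum (fun k _ => ?_)
    by_cases hk : (k:ℤ) ∈ E
    · simp [hk]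
    · simp [hk]
  have h2 := harmonic_le_one_add_log n
  rw [inv_mul_le_iff₀ (by linarith)]
  linarith

lemma taut_small {m : Set ℤ → ℝ} (h : InvMean m) (hDE : DE m) (B : Set ℕ) (hB0 : 0 ∉ B)
    (htaut : IsTaut B) (d : ℕ) (e : ℝ) (he : 0 < e) :
    ∃ N, m (multiplesZ (Cset B d N)) < e := by
  by_contra! hcon
  have hne : (Cset B d 0).Nonempty := by
    by_contra hemp
    rw [Set.not_nonempty_iff_eq_empty] at hemp
    have h1 := hcon 0
    have h2 : multiplesZ (∅ : Set ℕ) = ∅ := by ext x; simp [multiplesZ]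
    rw [hemp, h2, h.empty] at h1
    linarith
  obtain ⟨c0, hc0⟩ := hne
  have hd0 : 0 < d := by
    rcases Nat.eq_zero_or_pos d with rfl | hd
    · have := hc0.2.1; simp at this; exact absurd this hB0
    · exact hd
  have ht := htaut _ hc0.2.1
  unfold logDensLow at ht
  obtain ⟨r, hr1, hr2⟩ := exists_between ht
  obtain ⟨r', hr1', hr2'⟩ := exists_between hr2
  have hfr : ∃ᶠ n in atTop, logWeight (multiplesZ (B \ {d * c0})) n < r :=
    frequently_lt_of_liminf_lt
      ((logWeight_bdd _).isCoboundedUnder_ge) hr1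
  have hev : ∀ᶠ n in atTop, r' < logWeight (multiplesZ B) n :=
    eventually_lt_of_lt_liminf hr2' ⟨0, by
      rw [eventually_map]; exact Eventually.of_forall (fun n => logWeight_nonneg _ n)⟩
  have hnb : NeBot (atTop ⊓ 𝓟 {n | logWeight (multiplesZ (B \ {d * c0})) n < r}) :=
    frequently_iff_neBot.1 hfr
  set U := Ultrafilter.of (atTop ⊓ 𝓟 {n | logWeight (multiplesZ (B \ {d * c0})) n < r}) with hUdef
  have hU := Ultrafilter.of_le (atTop ⊓ 𝓟 {n | logWeight (multiplesZ (B \ {d * c0})) n < r})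
  rw [← hUdef] at hU
  have hUt : (U : Filter ℕ) ≤ atTop := hU.trans inf_le_left
  obtain ⟨m', hm', hlim⟩ := log_mean U hUt
  have e1 : m' (multiplesZ (B \ {d * c0})) ≤ r := by
    refine le_of_tendsto (hlim _) ?_
    have : {n | logWeight (multiplesZ (B \ {d * c0})) n < r} ∈ (U : Filter ℕ) :=
      le_principal_iff.1 (hU.trans inf_le_right)
    filter_upwards [this] with n hn using le_of_lt hn
  have e2 : r' ≤ m' (multiplesZ B) := by
    refine ge_of_tendsto (hlim _) ?_
    filter_upwards [hev.filter_mono hUt] with n hn using hn.le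
  have e3 : r' - r ≤ m' (multiplesZ B \ multiplesZ (B \ {d * c0})) := by
    rw [hm'.diff (multiplesZ_mono Set.sdiff_subset)]
    linarith
  have he1 : e ≤ 1 := (hcon 0).trans (by
    rw [← h.univ]; exact h.mono (Set.subset_univ _))
  obtain ⟨j, hj⟩ := exists_pow_lt_of_lt_one (show 0 < r' - r by linarith)
    (show 1 - e / 2 < 1 by linarith)
  obtain ⟨A, hA, hAm⟩ := zero_one h hDE B d e he hcon j c0
  have hA0 : 0 ∉ A := fun h0 => by have := (hA h0).1; omega
  have hsub : multiplesZ B \ multiplesZ (B \ {d * c0}) ⊆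
      (fun t => (d:ℤ) * t) '' (multiplesZ (A : Set ℕ))ᶜ := by
    rintro x ⟨⟨b, hb, hbx⟩, hx2⟩
    have hbe : b = d * c0 := by
      by_contra hbn
      exact hx2 ⟨b, ⟨hb, hbn⟩, hbx⟩
    subst hbe
    obtain ⟨y, rfl⟩ := hbx
    refine ⟨c0 * y, ?_, by push_cast; ring⟩
    rintro ⟨a, ha, haz⟩
    apply hx2
    refine ⟨d * a, ⟨(hA ha).2.1, ?_⟩, ?_⟩
    · intro heq
      have hac : a = c0 := Nat.eq_of_mul_eq_mul_left hd0 heq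
      have ha1 := (hA ha).1
      obtain ⟨p, hp, hpa⟩ := Nat.exists_prime_and_dvd (by omega : a ≠ 1)
      have := (hA ha).2.2 p hp hpa
      have := Nat.le_of_dvd (by omega) hpa
      omega
    · push_cast
      rw [mul_assoc]
      exact mul_dvd_mul_left _ haz
  have e4 := hm'.mono hsub
  have e5 : m' ((fun t => (d:ℤ) * t) '' (multiplesZ (A : Set ℕ))ᶜ) ≤
      scl m' d (multiplesZ (A : Set ℕ))ᶜ := by
    unfold scl
    have h1 : (1:ℝ) ≤ d := by exact_mod_cast hd0
    nlinarith [hm'.nonneg ((fun t => (d:ℤ) * t) '' (multiplesZ (A : Set ℕ))ᶜ)]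
  have e6 : scl m' d (multiplesZ (A : Set ℕ))ᶜ = m (multiplesZ (A : Set ℕ))ᶜ := by
    rw [(scl_mean hm' d hd0).compl, h.compl, multiples_mean_eq (scl_mean hm' d hd0) h A hA0]
  linarith

lemma smooth_finite (B : Set ℕ) (hB0 : 0 ∉ B) (hprim : Primitive B) (N : ℕ) :
    (Bsmooth B N).Finite := by
  by_contra hinf
  have hinf' : (Bsmooth B N).Infinite := hinf
  let f : ℕ → ℕ := fun n => (hinf'.natEmbedding _ n : ℕ)
  have hfm : ∀ n, f n ∈ Bsmooth B N := fun n => (hinf'.natEmbedding _ n).2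
  have hfi : Function.Injective f := fun a b hab =>
    (hinf'.natEmbedding _).injective (Subtype.ext hab)
  let g : ℕ → (Fin (N+1) → ℕ) := fun n i => (f n).factorization i
  obtain ⟨i, j, hij, hle⟩ := (wellQuasiOrdered_le (α := Fin (N+1) → ℕ)) g
  have h0 : ∀ n, f n ≠ 0 := fun n e => hB0 (e ▸ (hfm n).1)
  have hdvd : f i ∣ f j := by
    rw [← Nat.factorization_le_iff_dvd (h0 i) (h0 j)]
    intro p
    by_cases hp : p.Prime ∧ p ∣ f i
    · have hpN := (hfm i).2 p hp.1 hp.2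
      exact hle ⟨p, by omega⟩
    · rw [not_and_or] at hp
      have : (f i).factorization p = 0 := by
        rw [Nat.factorization_eq_zero_iff]
        tauto
      rw [this]; exact Nat.zero_le _
  have := hfi (hprim _ (hfm i).1 _ (hfm j).1 hdvd)
  omega

lemma split_smooth (N b : ℕ) (hb : b ≠ 0) : ∃ b' c, b = b' * c ∧
    (∀ p : ℕ, p.Prime → p ∣ b' → p ≤ N) ∧ (∀ p : ℕ, p.Prime → p ∣ c → N < p) := by
  induction b using Nat.recOnMul with
  | zero => exact absurd rfl hb
  | one =>
    refine ⟨1, 1, rfl, ?_, ?_⟩ <;>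
    · intro p hp h; exact absurd (Nat.dvd_one.1 h) hp.ne_one
  | prime q hq =>
    by_cases h : q ≤ N
    · refine ⟨q, 1, by simp, ?_, ?_⟩
      · intro p hp h'; rwa [(Nat.prime_dvd_prime_iff_eq hp hq).1 h']
      · intro p hp h; exact absurd (Nat.dvd_one.1 h) hp.ne_one
    · refine ⟨1, q, by simp, ?_, ?_⟩
      · intro p hp h; exact absurd (Nat.dvd_one.1 h) hp.ne_one
      · intro p hp h'; rw [(Nat.prime_dvd_prime_iff_eq hp hq).1 h']; omega
  | mul a b iha ihb =>
    obtain ⟨a1, a2, rfl, h1, h2⟩ := iha (left_ne_zero_of_mul hb)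
    obtain ⟨b1, b2, rfl, h3, h4⟩ := ihb (right_ne_zero_of_mul hb)
    refine ⟨a1 * b1, a2 * b2, by ring, ?_, ?_⟩
    · intro p hp h
      rcases (hp.dvd_mul).1 h with h | h
      · exact h1 p hp h
      · exact h3 p hp h
    · intro p hp h
      rcases (hp.dvd_mul).1 h with h | h
      · exact h2 p hp h
      · exact h4 p hp h

lemma scl_multiples_inf {m : Set ℤ → ℝ} (h : InvMean m) (hDE : DE m) (C : Set ℕ)
    (h0 : 0 ∉ C) (Q : ℕ) (hQ0 : 0 < Q) (hQ : ∀ a ∈ C, Nat.Coprime Q a) (a0 : ℤ) :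
    scl m Q {t : ℤ | a0 + Q * t ∈ multiplesZ C} ≤ m (multiplesZ C) := by
  refine le_of_forall_pos_le_add (fun e he => ?_)
  have hQr : (0:ℝ) < Q := by exact_mod_cast hQ0
  obtain ⟨A, hA, hAm⟩ := hDE C (e / Q) (by positivity)
  have h' := scl_mean h Q hQ0
  have hA0 : 0 ∉ A := fun hz => h0 (hA hz)
  have h1 := scl_multiples h A hA0 Q hQ0 (fun a ha => hQ a (hA ha)) a0
  have hsub : {t : ℤ | a0 + Q * t ∈ multiplesZ C} ⊆
      {t : ℤ | a0 + Q * t ∈ multiplesZ (A : Set ℕ)} ∪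
      {t : ℤ | a0 + Q * t ∈ multiplesZ C \ multiplesZ (A : Set ℕ)} := by
    intro t ht
    by_cases hh : a0 + Q * t ∈ multiplesZ (A : Set ℕ)
    · exact Or.inl hh
    · exact Or.inr ⟨ht, hh⟩
  have h2 := (h'.mono hsub).trans (h'.union_le _ _)
  have h3 : scl m Q {t : ℤ | a0 + Q * t ∈ multiplesZ C \ multiplesZ (A : Set ℕ)} ≤ e := by
    rw [scl_class h]
    have h4 := h.mono (Set.inter_subset_left : (multiplesZ C \ multiplesZ (A : Set ℕ)) ∩
      {x | (Q:ℤ) ∣ x - a0} ⊆ _)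
    rw [h.diff (multiplesZ_mono hA)] at h4
    calc (Q:ℝ) * m ((multiplesZ C \ multiplesZ (A : Set ℕ)) ∩ {x | (Q:ℤ) ∣ x - a0})
        ≤ Q * (e / Q) := by gcongr; linarith
      _ = e := by field_simp
  have h5 := h.mono (multiplesZ_mono hA)
  linarith

lemma avoid {m : Set ℤ → ℝ} (h : InvMean m) (hDE : DE m) {ι : Type*} (s : Finset ι)
    (C : ι → Set ℕ) (a : ι → ℤ) (Q : ℕ) (hQ0 : 0 < Q) (h0 : ∀ i ∈ s, 0 ∉ C i)
    (hQ : ∀ i ∈ s, ∀ c ∈ C i, Nat.Coprime Q c)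
    (hsum : ∑ i ∈ s, m (multiplesZ (C i)) < 1) :
    ∃ t : ℤ, ∀ i ∈ s, a i + Q * t ∉ multiplesZ (C i) := by
  by_contra! hcon
  have h' := scl_mean h Q hQ0
  have hu : (Set.univ : Set ℤ) ⊆ ⋃ i ∈ s, {t : ℤ | a i + Q * t ∈ multiplesZ (C i)} := by
    intro t _
    obtain ⟨i, hi, hit⟩ := hcon t
    exact Set.mem_biUnion (Finset.mem_coe.2 hi) hit
  have h1 := (h'.mono hu).trans (h'.biUnion_le s _)
  rw [h'.univ] at h1
  have h2 : ∑ i ∈ s, scl m Q {t : ℤ | a i + Q * t ∈ multiplesZ (C i)} ≤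
      ∑ i ∈ s, m (multiplesZ (C i)) :=
    Finset.sum_le_sum (fun i hi => scl_multiples_inf h hDE (C i) (h0 i hi) Q hQ0 (hQ i hi) (a i))
  linarith

lemma crt (Q : ℕ) (m1 : ℤ) (r : ℕ → ℤ) (T : Finset ℕ) (hT : ∀ q ∈ T, q.Prime)
    (hQ : ∀ q ∈ T, Nat.Coprime Q q) :
    ∃ m2 : ℤ, (Q:ℤ) ∣ m2 - m1 ∧ ∀ q ∈ T, (q:ℤ) ∣ m2 - r q := by
  induction T using Finset.induction_on with
  | empty => exact ⟨m1, by simp, by simp⟩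
  | insert q T hq ih =>
    obtain ⟨m2, h1, h2⟩ := ih (fun p hp => hT p (Finset.mem_insert_of_mem hp))
      (fun p hp => hQ p (Finset.mem_insert_of_mem hp))
    have hqT : q ∈ insert q T := Finset.mem_insert_self _ _
    have hcop : Nat.Coprime (Q * ∏ p ∈ T, p) q := by
      refine Nat.Coprime.mul_left (hQ q hqT) (Nat.Coprime.prod_left (fun p hp => ?_))
      refine (Nat.coprime_primes (hT p (Finset.mem_insert_of_mem hp)) (hT q hqT)).2 ?_
      exact fun e => hq (e ▸ hp)
    obtain ⟨u, v, huv⟩ := Nat.isCoprime_iff_coprime.2 hcop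
    refine ⟨m2 + ((Q * ∏ p ∈ T, p : ℕ) : ℤ) * (u * (r q - m2)), ?_, ?_⟩
    · rw [add_sub_right_comm]
      refine dvd_add h1 (Dvd.dvd.mul_right ?_ _)
      exact_mod_cast Dvd.intro _ rfl
    · intro p hp
      rcases Finset.mem_insert.1 hp with rfl | hp
      · refine ⟨v * (m2 - r p), ?_⟩
        linear_combination (r p - m2) * huv
      · rw [add_sub_right_comm]
        refine dvd_add (h2 p hp) (Dvd.dvd.mul_right ?_ _)
        exact_mod_cast (Finset.dvd_prod_of_mem (fun p => p) hp).mul_left Q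

lemma exists_residue (K : Finset ℤ) (q : ℕ) (hq : 0 < q) (hK : K.card < q) :
    ∃ r : ℤ, ∀ k ∈ K, ¬ (q:ℤ) ∣ r + k := by
  haveI : NeZero q := ⟨hq.ne'⟩
  have hc : (K.image (fun k : ℤ => (-(k : ZMod q)))).card < Fintype.card (ZMod q) := by
    rw [ZMod.card]
    exact Finset.card_image_le.trans_lt hK
  obtain ⟨z, hz⟩ := Finset.exists_mem_notMem_of_card_lt_card
    (s := K.image (fun k : ℤ => (-(k : ZMod q)))) (t := Finset.univ) (by simpa using hc)
  obtain ⟨r, rfl⟩ := ZMod.intCast_surjective z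
  refine ⟨r, fun k hk hd => hz.2 ?_⟩
  refine Finset.mem_image.2 ⟨k, hk, ?_⟩
  have := (ZMod.intCast_zmod_eq_zero_iff_dvd (r + k) q).2 hd
  push_cast at this
  exact (eq_neg_of_add_eq_zero_left this).symm

lemma main_arith (B : Set ℕ) (hB0 : 0 ∉ B) (hprim : Primitive B) (htaut : IsTaut B)
    (K : Finset ℤ) (N0 : ℕ) (hK : K.card ≤ N0) (m0 : ℤ)
    (hfree : ∀ k ∈ K, ∀ b ∈ Bsmooth B N0, ¬ (b:ℤ) ∣ m0 + k) :
    ∃ m : ℤ, (∀ b ∈ Bsmooth B N0, (b:ℤ) ∣ m - m0) ∧ ∀ k ∈ K, m + k ∈ freeZ B := by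
  obtain ⟨μ, hμ, hDE⟩ := zeta_mean
  have hfin := smooth_finite B hB0 hprim N0
  set L : ℕ := ∏ b ∈ hfin.toFinset, b with hL
  have hLpos : 0 < L := Finset.prod_pos (fun b hb => Nat.pos_of_ne_zero (fun e =>
    hB0 (e ▸ (hfin.mem_toFinset.1 hb).1)))
  have hLdvd : ∀ b ∈ Bsmooth B N0, b ∣ L := fun b hb =>
    Finset.dvd_prod_of_mem (fun b => b) (hfin.mem_toFinset.2 hb)
  have hLsm : ∀ p : ℕ, p.Prime → p ∣ L → p ≤ N0 := by
    intro p hp hpL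
    obtain ⟨b, hb, hpb⟩ := (hp.prime.dvd_finsetProd_iff _).1 hpL
    exact (hfin.mem_toFinset.1 hb).2 p hp hpb
  set m1 : ℤ := m0 + L * (|m0| + ∑ k ∈ K, |k| + 1) with hm1
  have hm1pos : ∀ k ∈ K, 0 < m1 + k := by
    intro k hk
    have h1 : |k| ≤ ∑ k ∈ K, |k| := Finset.single_le_sum (f := fun k : ℤ => |k|)
      (fun i _ => abs_nonneg i) hk
    have h2 : (1:ℤ) ≤ L := by exact_mod_cast hLpos
    have h3 := neg_abs_le m0
    have h4 := neg_abs_le k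
    have h5 := abs_nonneg m0
    have h6 := abs_nonneg k
    have : |m0| + ∑ k ∈ K, |k| + 1 ≤ L * (|m0| + ∑ k ∈ K, |k| + 1) := by nlinarith
    linarith
  set e : ℕ := ∑ k ∈ K, (m1 + k).toNat with he
  have hm1lt : ∀ k ∈ K, (m1 + k).toNat < 2 ^ e := by
    intro k hk
    have h1 : (m1 + k).toNat ≤ e := Finset.single_le_sum (f := fun k : ℤ => (m1 + k).toNat)
      (fun i _ => Nat.zero_le _) hk
    exact h1.trans_lt Nat.lt_two_pow_self
  set Q : ℕ := L * (N0.factorial) ^ e with hQ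
  have hQpos : 0 < Q := Nat.mul_pos hLpos (pow_pos (Nat.factorial_pos _) _)
  have hQsm : ∀ p : ℕ, p.Prime → p ∣ Q → p ≤ N0 := by
    intro p hp hpQ
    rcases (hp.dvd_mul).1 hpQ with h | h
    · exact hLsm p hp h
    · exact (hp.dvd_factorial).1 (hp.dvd_of_dvd_pow h)
  set Dv : Finset ℕ := K.biUnion (fun k => (m1 + k).toNat.divisors) with hDv
  set ep : ℝ := 1 / ((K ×ˢ Dv).card + 1) with hep
  have hep0 : 0 < ep := by positivity
  choose Nf hNf using fun d => taut_small hμ hDE B hB0 htaut d ep hep0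
  set N : ℕ := max N0 (Dv.sup Nf) with hN
  have hNm : ∀ d ∈ Dv, μ (multiplesZ (Cset B d N)) < ep := by
    intro d hd
    refine lt_of_le_of_lt (hμ.mono (multiplesZ_mono (Cset_anti B d ?_))) (hNf d)
    exact (Finset.le_sup hd).trans (le_max_right _ _)
  have hres : ∀ q : ℕ, ∃ r : ℤ, N0 < q → ∀ k ∈ K, ¬ (q:ℤ) ∣ r + k := by
    intro q
    by_cases hq : N0 < q
    · obtain ⟨r, hr⟩ := exists_residue K q (by omega) (by omega)
      exact ⟨r, fun _ => hr⟩
    · exact ⟨0, fun h => absurd h hq⟩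
  choose r hr using hres
  set T : Finset ℕ := (Finset.Ioc N0 N).filter Nat.Prime with hT
  have hTp : ∀ q ∈ T, q.Prime := fun q hq => (Finset.mem_filter.1 hq).2
  have hTQ : ∀ q ∈ T, Nat.Coprime Q q := by
    intro q hq
    refine Nat.Coprime.symm (((hTp q hq).coprime_iff_not_dvd).2 (fun h => ?_))
    have h1 := hQsm q (hTp q hq) h
    have h2 := (Finset.mem_Ioc.1 (Finset.mem_filter.1 hq).1).1
    omega
  obtain ⟨m2, hm2Q, hm2T⟩ := crt Q m1 r T hTp hTQ
  set Q' : ℕ := Q * ∏ q ∈ T, q with hQ'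
  have hQ'pos : 0 < Q' := Nat.mul_pos hQpos (Finset.prod_pos (fun q hq => (hTp q hq).pos))
  have hQ'sm : ∀ p : ℕ, p.Prime → p ∣ Q' → p ≤ N := by
    intro p hp hpQ
    rcases (hp.dvd_mul).1 hpQ with h | h
    · exact (hQsm p hp h).trans (le_max_left _ _)
    · obtain ⟨q, hq, hpq⟩ := (hp.prime.dvd_finsetProd_iff _).1 h
      rw [(Nat.prime_dvd_prime_iff_eq hp (hTp q hq)).1 hpq]
      exact (Finset.mem_Ioc.1 (Finset.mem_filter.1 hq).1).2
  obtain ⟨t, ht⟩ := avoid hμ hDE (K ×ˢ Dv) (fun x => Cset B x.2 N) (fun x => m2 + x.1) Q' hQ'pos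
    (fun x _ h => by have := h.1; omega)
    (fun x _ c hc => by
      refine Nat.coprime_of_dvd (fun p hp hpQ hpc => ?_)
      have h1 := hQ'sm p hp hpQ
      have h2 := hc.2.2 p hp hpc
      omega)
    (by
      have h1 : ∑ x ∈ K ×ˢ Dv, μ (multiplesZ (Cset B x.2 N)) ≤ ∑ x ∈ K ×ˢ Dv, ep :=
        Finset.sum_le_sum (fun x hx => (hNm x.2 (Finset.mem_product.1 hx).2).le)
      refine h1.trans_lt ?_
      rw [Finset.sum_const, nsmul_eq_mul, hep, mul_one_div, div_lt_one (by positivity)]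
      linarith)
  have hmm1 : (Q:ℤ) ∣ m2 + Q' * t - m1 := by
    rw [add_sub_right_comm]
    refine dvd_add hm2Q (Dvd.dvd.mul_right ?_ _)
    exact_mod_cast Dvd.intro _ rfl
  have hLQ : (L:ℤ) ∣ Q := by exact_mod_cast Dvd.intro _ rfl
  have hLm1 : (L:ℤ) ∣ m1 - m0 := ⟨|m0| + ∑ k ∈ K, |k| + 1, by rw [hm1]; ring⟩
  refine ⟨m2 + Q' * t, ?_, ?_⟩
  · intro b hb
    have hbL : (b:ℤ) ∣ L := by exact_mod_cast hLdvd b hb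
    have h1 := dvd_add ((hbL.trans hLQ).trans hmm1) (hbL.trans hLm1)
    rwa [show m2 + Q' * t - m1 + (m1 - m0) = m2 + Q' * t - m0 by ring] at h1
  · rintro k hk ⟨b, hb, hbm⟩
    have hb0 : b ≠ 0 := fun h => hB0 (h ▸ hb)
    obtain ⟨b', c, rfl, hb', hc⟩ := split_smooth N0 b hb0
    have hb'm : (b':ℤ) ∣ m2 + Q' * t + k := by
      refine dvd_trans ?_ hbm
      push_cast; exact dvd_mul_right _ _
    have hcm : (c:ℤ) ∣ m2 + Q' * t + k := by
      refine dvd_trans ?_ hbm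
      push_cast; exact dvd_mul_left _ _
    have hkpos := hm1pos k hk
    have hcast : (((m1 + k).toNat : ℕ) : ℤ) = m1 + k := Int.toNat_of_nonneg hkpos.le
    -- transfer of divisibility modulo divisors of `Q`
    have htr : ∀ x : ℕ, x ∣ Q → (x:ℤ) ∣ m2 + Q' * t + k → x ∣ (m1 + k).toNat := by
      intro x hxQ hx
      have hxQ' : (x:ℤ) ∣ Q := by exact_mod_cast hxQ
      have h1 := dvd_sub hx (hxQ'.trans hmm1)
      rw [show m2 + Q' * t + k - (m2 + Q' * t - m1) = m1 + k by ring, ← hcast] at h1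
      exact_mod_cast h1
    have hb'1 : b' ∣ (m1 + k).toNat := by
      refine (Nat.dvd_iff_prime_pow_dvd_dvd _ _).2 (fun p j hp hpj => ?_)
      rcases Nat.eq_zero_or_pos j with rfl | hj
      · simp
      have hpN : p ≤ N0 := hb' p hp ((dvd_pow_self p hj.ne').trans hpj)
      have hpe : p ^ e ∣ Q := by
        refine Dvd.dvd.mul_left ?_ _
        exact pow_dvd_pow_of_dvd ((hp.dvd_factorial).2 hpN) e
      have hpjm : ((p ^ j : ℕ) : ℤ) ∣ m2 + Q' * t + k :=
        dvd_trans (by exact_mod_cast hpj) hb'm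
      by_cases hje : j ≤ e
      · exact htr _ ((pow_dvd_pow p hje).trans hpe) hpjm
      · exfalso
        have hpem : ((p ^ e : ℕ) : ℤ) ∣ m2 + Q' * t + k :=
          dvd_trans (by exact_mod_cast pow_dvd_pow p (by omega)) hpjm
        have h1 := Nat.le_of_dvd (by omega) (htr _ hpe hpem)
        have h2 := hm1lt k hk
        have h3 : 2 ^ e ≤ p ^ e := Nat.pow_le_pow_left hp.two_le e
        omega
    have hb'D : b' ∈ Dv :=
      Finset.mem_biUnion.2 ⟨k, hk, Nat.mem_divisors.2 ⟨hb'1, by omega⟩⟩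
    have hc1 : c ≠ 1 := by
      rintro rfl
      rw [mul_one] at hb
      have hbs : b' ∈ Bsmooth B N0 := ⟨hb, hb'⟩
      apply hfree k hk b' hbs
      have hbL : (b':ℤ) ∣ L := by exact_mod_cast hLdvd b' hbs
      have h1 : (b':ℤ) ∣ m1 + k := by rw [← hcast]; exact_mod_cast hb'1
      have h2 := dvd_sub h1 (hbL.trans hLm1)
      rwa [show m1 + k - (m1 - m0) = m0 + k by ring] at h2
    have hc0 : c ≠ 0 := right_ne_zero_of_mul hb0
    apply ht (k, b') (Finset.mem_product.2 ⟨hk, hb'D⟩)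
    refine ⟨c, ⟨by omega, hb, fun p hp hpc => ?_⟩, ?_⟩
    · by_contra hpN
      have hpT : p ∈ T := Finset.mem_filter.2 ⟨Finset.mem_Ioc.2 ⟨hc p hp hpc, by omega⟩, hp⟩
      apply hr p (hc p hp hpc) k hk
      have h1 : (p:ℤ) ∣ m2 + Q' * t + k := dvd_trans (by exact_mod_cast hpc) hcm
      have h2 : (p:ℤ) ∣ Q' := by
        exact_mod_cast (Finset.dvd_prod_of_mem (fun p => p) hpT).mul_left Q
      have h3 := dvd_sub (dvd_sub h1 (h2.mul_right t)) (hm2T p hpT)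
      rwa [show m2 + Q' * t + k - Q' * t - (m2 - r p) = r p + k by ring] at h3
    · rw [show m2 + k + Q' * t = m2 + Q' * t + k by ring]
      exact hcm

/-- If `B` is taut, then the orbit closure `X_η` equals `X_φ`, the closure of `φ(H)`. -/
theorem Xeta_eq_Xphi (B : Set ℕ) [∀ b : B, NeZero (b : ℕ)] (hB0 : 0 ∉ B)
    (hprim : Primitive B) (htaut : IsTaut B) :
    Xeta B = closure (Set.range (phiW B)) := by
  apply Set.Subset.antisymm
  · refine closure_mono ?_
    rintro _ ⟨m, rfl⟩
    refine ⟨⟨diagEmb B m, subset_closure ⟨m, rfl⟩⟩, ?_⟩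
    funext n
    simp only [phiW, eta]
    rw [decide_eq_decide]
    simp only [freeZ, multiplesZ, Set.mem_compl_iff, Set.mem_ofPred_eq, not_exists, not_and]
    constructor
    · intro h b hb hd
      apply h ⟨b, hb⟩
      have := (ZMod.intCast_zmod_eq_zero_iff_dvd (n + m) b).2 hd
      push_cast at this
      rw [add_comm]
      exact this
    · intro h b hb
      apply h b b.2
      refine (ZMod.intCast_zmod_eq_zero_iff_dvd (n + m) b).1 ?_
      push_cast
      rw [add_comm]
      exact hb
  · refine closure_minimal ?_ isClosed_closure
    rintro _ ⟨h, rfl⟩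
    unfold Xeta
    rw [mem_closure_iff]
    intro o ho hmem
    obtain ⟨I, u, hu, hsub⟩ := isOpen_pi_iff.1 ho _ hmem
    suffices hs : ∃ m : ℤ, ∀ k ∈ I, eta B (k + m) = phiW B h k by
      obtain ⟨m, hm⟩ := hs
      refine ⟨fun n => eta B (n + m), hsub ?_, ⟨m, rfl⟩⟩
      intro k hk
      simp only
      rw [hm k hk]
      exact (hu k hk).2
    have hch : ∀ k : ℤ, ∃ b : ℕ, phiW B h k = false →
        ∃ hb : b ∈ B, (h : (b : B) → ZMod b) ⟨b, hb⟩ + (k : ZMod b) = 0 := by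
      intro k
      by_cases hk : phiW B h k = false
      · simp only [phiW, decide_eq_false_iff_not, not_forall, not_not] at hk
        obtain ⟨b, hb⟩ := hk
        exact ⟨b, fun _ => ⟨b.2, hb⟩⟩
      · exact ⟨0, fun h => absurd h hk⟩
    choose β hβ using hch
    set N0 : ℕ := I.card + ∑ k ∈ I, β k with hN0
    have hfin := smooth_finite B hB0 hprim N0
    -- an integer close to `h`
    have hm0 : ∃ m0 : ℤ, ∀ b : B, (b : ℕ) ∈ Bsmooth B N0 →
        (m0 : ZMod b) = (h : (b : B) → ZMod b) b := by
      have hcl : (h : (b : B) → ZMod b) ∈ closure (Set.range (diagEmb B)) := h.2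
      have hfin' : {b : B | (b : ℕ) ∈ Bsmooth B N0}.Finite :=
        hfin.preimage (Subtype.val_injective.injOn)
      have hop : IsOpen (Set.pi {b : B | (b : ℕ) ∈ Bsmooth B N0}
          (fun b => ({(h : (b : B) → ZMod b) b} : Set (ZMod b)))) :=
        isOpen_set_pi hfin' (fun b _ => isOpen_discrete _)
      obtain ⟨_, hx, ⟨m0, rfl⟩⟩ := mem_closure_iff.1 hcl _ hop (fun b _ => rfl)
      exact ⟨m0, fun b hb => hx b hb⟩
    obtain ⟨m0, hm0⟩ := hm0
    obtain ⟨m, hm1, hm2⟩ := main_arith B hB0 hprim htaut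
      (I.filter (fun k => phiW B h k = true)) N0
      ((Finset.card_filter_le _ _).trans (Nat.le_add_right _ _)) m0 (by
        intro k hk b hb hd
        have hk' := (Finset.mem_filter.1 hk).2
        simp only [phiW, decide_eq_true_eq] at hk'
        apply hk' ⟨b, hb.1⟩
        rw [← hm0 ⟨b, hb.1⟩ hb]
        have : NeZero b := ⟨fun e => hB0 (e ▸ hb.1)⟩
        have := (ZMod.intCast_zmod_eq_zero_iff_dvd (m0 + k) b).2 hd
        push_cast at this
        exact this)
    refine ⟨m, fun k hk => ?_⟩
    cases hp : phiW B h k with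
    | true =>
      have := hm2 k (Finset.mem_filter.2 ⟨hk, hp⟩)
      simp only [eta, decide_eq_true_eq]
      rwa [add_comm]
    | false =>
      obtain ⟨hb, hbk⟩ := hβ k hp
      have hb0 : β k ≠ 0 := fun e => hB0 (e ▸ hb)
      have hle : β k ≤ N0 := (Finset.single_le_sum (f := β) (fun i _ => Nat.zero_le _) hk).trans
        (Nat.le_add_left _ _)
      have hbs : β k ∈ Bsmooth B N0 :=
        ⟨hb, fun p _ hpb => (Nat.le_of_dvd (Nat.pos_of_ne_zero hb0) hpb).trans hle⟩
      have h1 := hm0 ⟨β k, hb⟩ hbs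
      rw [← h1] at hbk
      have : NeZero (β k) := ⟨hb0⟩
      have h2 : ((β k : ℕ) : ℤ) ∣ m0 + k := by
        refine (ZMod.intCast_zmod_eq_zero_iff_dvd (m0 + k) (β k)).1 ?_
        push_cast
        exact hbk
      have h3 := dvd_add (hm1 _ hbs) h2
      rw [show m - m0 + (m0 + k) = k + m by ring] at h3
      simp only [eta, decide_eq_false_iff_not, freeZ, Set.mem_compl_iff, not_not]
      exact ⟨β k, hb, h3⟩
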